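/- arXiv:1901.10089 — 4 statements merged into one kernel-verified Lean document; each statement's English description precedes it below -/
import Mathlib

section
/- Let n ≥ 1, let w_{ij} ≥ 0 (i,j = 1,…,n) be nonnegative weights, let β ≥ 0, let g : ℝ → ℝ be strictly increasing, and let h : {1,…,n} → ℝ be arbitrary. If z : {1,…,n} → ℝ satisfies −β Δ_Γ z(i) − ( g(z(i) + h(i)) − g(h(i)) ) ≥ 0 for every i = 1,…,n, then z(i) ≤ 0 for every i = 1,…,n. -/
open Finset

section GraphLaplacian

variable {ι R : Type*} [Fintype ι] [Ring R]

/-- The Laplacian `Δ_Γ` of a finite weighted graph, with the sign that makes it a nonnegative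
operator for symmetric nonnegative weights. The weights `w` need not be symmetric. -/
def graphLaplacian (w : ι → ι → R) (u : ι → R) (i : ι) : R :=
  ∑ j, w i j * (u i - u j)

theorem graphLaplacian_nonneg_of_forall_le [PartialOrder R] [IsOrderedRing R]
    {w : ι → ι → R} {u : ι → R} {i : ι} (hw : ∀ j, 0 ≤ w i j) (hu : ∀ j, u j ≤ u i) :
    0 ≤ graphLaplacian w u i :=
  sum_nonneg fun j _ => mul_nonneg (hw j) (sub_nonneg.mpr (hu j))

variable [LinearOrder R] [IsOrderedRing R] {w : ι → ι → R}

theorem nonpos_of_graphLaplacian_neg_of_pos (hw : ∀ i j, 0 ≤ w i j) {u : ι → R}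
    (hu : ∀ i, 0 < u i → graphLaplacian w u i < 0) (i : ι) : u i ≤ 0 := by
  have : Nonempty ι := ⟨i⟩
  obtain ⟨k, hmax⟩ := Finite.exists_max u
  have hLap : 0 ≤ graphLaplacian w u k := graphLaplacian_nonneg_of_forall_le (hw k) hmax
  have hk : u k ≤ 0 := le_of_not_gt fun hpos => (hu k hpos).not_ge hLap
  exact (hmax i).trans hk

theorem graph_maximum_principle_general (hw : ∀ i j, 0 ≤ w i j) {β : R} (hβ : 0 ≤ β)
    {f : ι → R → R} (hf : ∀ i t, 0 < t → 0 < f i t) {z : ι → R}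
    (hz : ∀ i, 0 ≤ -β * graphLaplacian w z i - f i (z i)) (i : ι) : z i ≤ 0 := by
  refine nonpos_of_graphLaplacian_neg_of_pos hw (fun k hk => ?_) i
  have hdiffusion : 0 < -(β * graphLaplacian w z k) :=
    calc
      0 < f k (z k) := hf k _ hk
      _ ≤ -β * graphLaplacian w z k := sub_nonneg.mp (hz k)
      _ = -(β * graphLaplacian w z k) := neg_mul _ _
  exact lt_of_not_ge fun hLap => (neg_pos.mp hdiffusion).not_ge (mul_nonneg hβ hLap)

end GraphLaplacian

/-- Maximum principle for the graph Laplacian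
`Δ_Γ z i = ∑ j, w i j * (z i - z j)`: if
`-β * Δ_Γ z i - (g (z i + h i) - g (h i)) ≥ 0` for every `i`,
with `w` nonnegative, `β ≥ 0` and `g` strictly increasing, then `z ≤ 0`. -/
theorem graph_maximum_principle
    (n : ℕ) (hn : 1 ≤ n) (w : Fin n → Fin n → ℝ) (hw : ∀ i j, 0 ≤ w i j)
    (β : ℝ) (hβ : 0 ≤ β) (g : ℝ → ℝ) (hg : StrictMono g)
    (h z : Fin n → ℝ)
    (hz : ∀ i, 0 ≤ -β * (∑ j, w i j * (z i - z j)) - (g (z i + h i) - g (h i))) :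
    ∀ i, z i ≤ 0 :=
  graph_maximum_principle_general (f := fun i t => g (t + h i) - g (h i)) hw hβ
    (fun i _ ht => sub_pos.mpr (hg (lt_add_of_pos_left (h i) ht))) hz
end

section
/- Let m ≥ 1 and let η : [0,∞) → [0,∞) be measurable, bounded, vanishing outside [0,1], and normalized so that ∫_{ℝ^m} η(|z|) dz = 1; set τ_η := ∫_{ℝ^m} |z₁|² η(|z|) dz and assume τ_η > 0. Let h : ℝ^m → ℝ be three times continuously differentiable with sup_{x∈ℝ^m} ‖D³h(x)‖ =: M₃ < ∞. Then there exists a constant C depending only on m and η, and depending at most linearly on M₃ (one may take C = M₃/(3τ_η)), such that for every ε ∈ (0,1] and every x ∈ ℝ^m, | (2/(τ_η ε^{m+2})) ∫_{ℝ^m} η(|x − y|/ε) (h(x) − h(y)) dy + Δh(x) | ≤ C ε, where Δh = ∑_{k=1}^m ∂²h/∂x_k² is the Euclidean Laplacian. -/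
open MeasureTheory Finset

/-!
Up to the factor `2 / τ_ε`, the nonlocal operator integrates `h x - h (x + v)` against the kernel
`η (‖v‖ / ε)`, whose second moment is `τ_ε = τ * ε ^ (m + 2)`. Expand `h (x + v)` to second order.
The kernel is invariant under linear isometries, so `v ↦ -v` kills the linear term, and reflections
turn the quadratic term into `τ_ε / 2` times the trace of the Hessian. The cubic remainder is at
most `M₃ / 6 * ε ^ 3` times the mass `ε ^ m` of the kernel, which leaves an error of order `ε`
after division by `τ_ε`.
-/

open Metric Module InnerProductSpace
open scoped Laplacian Nat

section Taylor

variable {E F : Type*} [NormedAddCommGroup E] [NormedSpace ℝ E] [NormedAddCommGroup F]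
  [NormedSpace ℝ F] [CompleteSpace F] {f : E → F} {x v : E} {M : ℝ}

theorem norm_sub_sum_iteratedFDeriv_le {n : ℕ}
    (hf : ∀ t ∈ Set.Icc (0 : ℝ) 1, ContDiffAt ℝ (n + 1) f (x + t • v))
    (hM : ∀ t ∈ Set.Icc (0 : ℝ) 1, ‖iteratedFDeriv ℝ (n + 1) f (x + t • v)‖ ≤ M) :
    ‖f (x + v) - ∑ k ∈ range (n + 1), (k ! : ℝ)⁻¹ • iteratedFDeriv ℝ k f x (fun _ => v)‖
      ≤ M / (n + 1)! * ‖v‖ ^ (n + 1) := by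
  have integrand_le (t : ℝ) (ht : t ∈ Set.Ioc (0 : ℝ) 1) :
      ‖(1 - t) ^ n • iteratedFDeriv ℝ (n + 1) f (x + t • v) (fun _ => v)‖
        ≤ (1 - t) ^ n * (M * ‖v‖ ^ (n + 1)) := by
    have ht' : 0 ≤ (1 - t) ^ n := pow_nonneg (sub_nonneg.2 ht.2) n
    rw [norm_smul, Real.norm_of_nonneg ht']
    gcongr
    simpa using (iteratedFDeriv ℝ (n + 1) f (x + t • v)).le_of_opNorm_le
      (hM t ⟨ht.1.le, ht.2⟩) (fun _ => v)
  have integral_weight : ∫ t in (0 : ℝ)..1, (1 - t) ^ n = 1 / (n + 1) := by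
    simp [intervalIntegral.integral_comp_sub_left (fun t : ℝ => t ^ n) 1]
  have integral_le := intervalIntegral.norm_integral_le_of_norm_le zero_le_one
    (μ := volume) (.of_forall integrand_le) (Continuous.intervalIntegrable (by fun_prop) _ _)
  rw [intervalIntegral.integral_mul_const, integral_weight] at integral_le
  rw [map_add_eq_sum_add_integral_iteratedFDeriv hf, add_sub_cancel_left, norm_smul, norm_inv,
    RCLike.norm_natCast]
  calc _ ≤ (n ! : ℝ)⁻¹ * (1 / (n + 1) * (M * ‖v‖ ^ (n + 1))) := by gcongr
    _ = M / (n + 1)! * ‖v‖ ^ (n + 1) := by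
      rw [Nat.factorial_succ]
      push_cast
      field_simp

theorem norm_sub_taylor_two_le {r : ℝ} (hv : ‖v‖ ≤ r)
    (hf : ∀ y ∈ closedBall x r, ContDiffAt ℝ 3 f y)
    (hM : ∀ y ∈ closedBall x r, ‖iteratedFDeriv ℝ 3 f y‖ ≤ M) :
    ‖f (x + v) - (f x + fderiv ℝ f x v + (1 / 2 : ℝ) • fderiv ℝ (fderiv ℝ f) x v v)‖
      ≤ M / 6 * ‖v‖ ^ 3 := by
  have segment_subset (t : ℝ) (ht : t ∈ Set.Icc (0 : ℝ) 1) : x + t • v ∈ closedBall x r := by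
    rw [mem_closedBall, dist_self_add_left, norm_smul, Real.norm_of_nonneg ht.1]
    exact (mul_le_of_le_one_left (norm_nonneg v) ht.2).trans hv
  have taylor := norm_sub_sum_iteratedFDeriv_le (n := 2)
    (fun t ht => by exact_mod_cast hf _ (segment_subset t ht))
    (fun t ht => hM _ (segment_subset t ht))
  simpa [sum_range_succ, iteratedFDeriv_two_apply, Nat.factorial] using taylor

end Taylor

theorem integrable_smul_of_continuousOn_of_support_subset {X F : Type*} [TopologicalSpace X]
    [T2Space X] [MeasurableSpace X] [OpensMeasurableSpace X] [NormedAddCommGroup F]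
    [NormedSpace ℝ F] [SecondCountableTopologyEither X F] {μ : Measure X} {k : X → ℝ} {w : X → F}
    {K : Set X} (hk : Integrable k μ) (hw : ContinuousOn w K) (hK : IsCompact K)
    (hkK : Function.support k ⊆ K) : Integrable (fun v => k v • w v) μ :=
  (integrableOn_iff_integrable_of_support_subset
    ((Function.support_smul_subset_left k w).trans hkK)).1 (hk.integrableOn.smul_continuousOn hw hK)

theorem inner_reflection_right {𝕜 E : Type*} [RCLike 𝕜] [NormedAddCommGroup E]
    [InnerProductSpace 𝕜 E] (K : Submodule 𝕜 E) [K.HasOrthogonalProjection] (x y : E) :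
    ⟪x, K.reflection y⟫_𝕜 = ⟪K.reflection x, y⟫_𝕜 := by
  rw [LinearIsometryEquiv.inner_map_eq_flip, Submodule.reflection_symm]

section RadialKernel

variable {E F : Type*} [NormedAddCommGroup E] [InnerProductSpace ℝ E] [FiniteDimensional ℝ E]
  [MeasurableSpace E] [BorelSpace E] [NormedAddCommGroup F] [NormedSpace ℝ F] {η : ℝ → ℝ} {r : ℝ}

theorem integrable_radial_smul (hη : Integrable (fun v : E => η ‖v‖))
    (hsupp : ∀ t, r < t → η t = 0) {w : E → F} (hw : ContinuousOn w (closedBall 0 r)) :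
    Integrable (fun v => η ‖v‖ • w v) := by
  refine integrable_smul_of_continuousOn_of_support_subset hη hw (isCompact_closedBall 0 r)
    fun v hv => ?_
  contrapose! hv
  simpa using hsupp ‖v‖ (by simpa using hv)

theorem integral_radial_smul_comp_isometry (η : ℝ → ℝ) (A : E ≃ₗᵢ[ℝ] E) (f : E → F) :
    ∫ v, η ‖v‖ • f (A v) = ∫ v, η ‖v‖ • f v := by
  simpa using A.measurePreserving.integral_comp A.toHomeomorph.measurableEmbedding
    (fun v => η ‖v‖ • f v)

theorem integral_radial_smul_eq_zero_of_comp_eq_neg (η : ℝ → ℝ) (A : E ≃ₗᵢ[ℝ] E) {f : E → F}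
    (hf : ∀ v, f (A v) = -f v) : ∫ v, η ‖v‖ • f v = 0 := by
  have neg_eq := integral_radial_smul_comp_isometry η A f
  simp only [hf, smul_neg, integral_neg] at neg_eq
  have := IsAddTorsionFree.of_isTorsionFree ℝ F
  exact neg_eq_self.1 neg_eq

theorem integral_radial_mul_inner_mul_inner_of_orthogonal (η : ℝ → ℝ) {e e' : E}
    (hee' : ⟪e, e'⟫_ℝ = 0) : ∫ v, η ‖v‖ * (⟪e, v⟫_ℝ * ⟪e', v⟫_ℝ) = 0 := by
  refine integral_radial_smul_eq_zero_of_comp_eq_neg η (ℝ ∙ e)ᗮ.reflection fun v => ?_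
  have fixes_e' : (ℝ ∙ e)ᗮ.reflection e' = e' :=
    Submodule.reflection_mem_subspace_eq_self
      (Submodule.mem_orthogonal_singleton_iff_inner_right.2 hee')
  rw [inner_reflection_right, inner_reflection_right, fixes_e',
    Submodule.reflection_orthogonalComplement_singleton_eq_neg, inner_neg_left, neg_mul]

theorem integral_radial_mul_inner_sq_eq_of_norm_eq (η : ℝ → ℝ) {e e' : E} (hee' : ‖e‖ = ‖e'‖) :
    ∫ v, η ‖v‖ * ⟪e, v⟫_ℝ ^ 2 = ∫ v, η ‖v‖ * ⟪e', v⟫_ℝ ^ 2 := by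
  rw [← Submodule.reflection_sub hee']
  simp_rw [← inner_reflection_right]
  exact (integral_radial_smul_comp_isometry η _ (fun v => ⟪e, v⟫_ℝ ^ 2)).symm

variable (E) in
/-- The second moment `τ_η` of the radial kernel `v ↦ η ‖v‖` on `E`, as the average of the moments
`∫ ⟪e, v⟫ ^ 2 * η ‖v‖` over an orthonormal basis. All these moments agree (see
`integral_radial_mul_inner_sq`), and the average does not single out a direction. -/
noncomputable def radialSecondMoment (η : ℝ → ℝ) : ℝ :=
  (∫ v : E, η ‖v‖ * ‖v‖ ^ 2) / finrank ℝ E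

theorem integral_radial_mul_inner_sq (hη : Integrable (fun v : E => η ‖v‖))
    (hsupp : ∀ t, r < t → η t = 0) {e : E} (he : ‖e‖ = 1) :
    ∫ v, η ‖v‖ * ⟪e, v⟫_ℝ ^ 2 = radialSecondMoment E η := by
  have : Nontrivial E := ⟨e, 0, norm_ne_zero_iff.1 (he ▸ one_ne_zero)⟩
  let b := stdOrthonormalBasis ℝ E
  rw [radialSecondMoment, eq_div_iff (by exact_mod_cast finrank_pos.ne')]
  calc (∫ v, η ‖v‖ * ⟪e, v⟫_ℝ ^ 2) * finrank ℝ E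
      = ∑ k, ∫ v, η ‖v‖ * ⟪b k, v⟫_ℝ ^ 2 := by
        simp [fun k => integral_radial_mul_inner_sq_eq_of_norm_eq η
          ((b.norm_eq_one k).trans he.symm), mul_comm]
    _ = ∫ v, ∑ k, η ‖v‖ * ⟪b k, v⟫_ℝ ^ 2 :=
        (integral_finsetSum _ fun k _ => integrable_radial_smul hη hsupp (by fun_prop)).symm
    _ = ∫ v, η ‖v‖ * ‖v‖ ^ 2 := by simp_rw [← mul_sum, b.sum_sq_inner_right]

theorem integral_radial_smul_bilinear [CompleteSpace F] {ι : Type*} [Fintype ι]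
    (hη : Integrable (fun v : E => η ‖v‖)) (hsupp : ∀ t, r < t → η t = 0) (B : E →L[ℝ] E →L[ℝ] F)
    (b : OrthonormalBasis ι ℝ E) :
    ∫ v, η ‖v‖ • B v v = radialSecondMoment E η • ∑ k, B (b k) (b k) := by
  classical
  have expand (v : E) : η ‖v‖ • B v v =
      ∑ k, ∑ l, (η ‖v‖ * (⟪b k, v⟫_ℝ * ⟪b l, v⟫_ℝ)) • B (b l) (b k) := by
    have basis_expansion : B v v = B (∑ k, ⟪b k, v⟫_ℝ • b k) (∑ l, ⟪b l, v⟫_ℝ • b l) := by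
      rw [b.sum_repr' v]
    simp only [basis_expansion, map_sum, map_smul, _root_.sum_apply, _root_.smul_apply, smul_sum,
      smul_smul]
  have moment (k l : ι) : ∫ v, η ‖v‖ * (⟪b k, v⟫_ℝ * ⟪b l, v⟫_ℝ) =
      if k = l then radialSecondMoment E η else 0 := by
    split_ifs with hkl
    · simp only [hkl, ← sq, integral_radial_mul_inner_sq hη hsupp (b.norm_eq_one l)]
    · exact integral_radial_mul_inner_mul_inner_of_orthogonal η (b.inner_eq_zero hkl)
  have hint (k l : ι) : Integrable
      (fun v => (η ‖v‖ * (⟪b k, v⟫_ℝ * ⟪b l, v⟫_ℝ)) • B (b l) (b k)) :=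
    (integrable_radial_smul hη hsupp (by fun_prop)).smul_const _
  simp_rw [expand]
  rw [integral_finsetSum _ fun k _ => integrable_finsetSum _ fun l _ => hint k l]
  simp_rw [integral_finsetSum _ fun l _ => hint _ l, integral_smul_const, moment, ite_smul,
    zero_smul, sum_ite_eq, mem_univ, if_true, smul_sum]

theorem integral_radial_smul_hessian [CompleteSpace F] (hη : Integrable (fun v : E => η ‖v‖))
    (hsupp : ∀ t, r < t → η t = 0) (f : E → F) (x : E) :
    ∫ v, η ‖v‖ • fderiv ℝ (fderiv ℝ f) x v v = radialSecondMoment E η • Δ f x := by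
  simp [integral_radial_smul_bilinear hη hsupp _ (stdOrthonormalBasis ℝ E),
    laplacian_eq_iteratedFDeriv_stdOrthonormalBasis, iteratedFDeriv_two_apply]

theorem integral_radial_smul_linear_add_hessian [CompleteSpace F]
    (hη : Integrable (fun v : E => η ‖v‖)) (hsupp : ∀ t, r < t → η t = 0) (f : E → F) (x : E) :
    ∫ v, η ‖v‖ • (fderiv ℝ f x v + (1 / 2 : ℝ) • fderiv ℝ (fderiv ℝ f) x v v) =
      (radialSecondMoment E η / 2) • Δ f x := by
  have linear : ∫ v, η ‖v‖ • fderiv ℝ f x v = 0 :=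
    integral_radial_smul_eq_zero_of_comp_eq_neg η (.neg ℝ) fun v => by simp
  simp_rw [smul_add]
  rw [integral_add (integrable_radial_smul hη hsupp (by fun_prop))
    (integrable_radial_smul hη hsupp (by fun_prop)), linear, zero_add]
  simp_rw [smul_comm (η _) (1 / 2 : ℝ)]
  rw [integral_smul, integral_radial_smul_hessian hη hsupp, smul_smul, one_div_mul_eq_div]

theorem norm_integral_radial_add_smul_laplacian_le [CompleteSpace F]
    (hη : Integrable (fun v : E => η ‖v‖)) (hsupp : ∀ t, r < t → η t = 0) {f : E → F} {x : E}
    {M : ℝ} (hf : ∀ y ∈ closedBall x r, ContDiffAt ℝ 3 f y)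
    (hM : ∀ y ∈ closedBall x r, ‖iteratedFDeriv ℝ 3 f y‖ ≤ M) :
    ‖(∫ v, η ‖v‖ • (f x - f (x + v))) + (radialSecondMoment E η / 2) • Δ f x‖
      ≤ M / 6 * r ^ 3 * ∫ v : E, |η ‖v‖| := by
  let taylor (v : E) : F := f x + fderiv ℝ f x v + (1 / 2 : ℝ) • fderiv ℝ (fderiv ℝ f) x v v
  have increment_continuousOn : ContinuousOn (fun v => f x - f (x + v)) (closedBall 0 r) :=
    fun v hv => (continuousAt_const.sub <| (hf (x + v) (by simpa using hv)).continuousAt.comp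
      (by fun_prop)).continuousWithinAt
  have integral_eq : (∫ v, η ‖v‖ • (f x - f (x + v))) + (radialSecondMoment E η / 2) • Δ f x =
      ∫ v, η ‖v‖ • (taylor v - f (x + v)) := by
    rw [← integral_radial_smul_linear_add_hessian hη hsupp,
      ← integral_add (integrable_radial_smul hη hsupp increment_continuousOn)
        (integrable_radial_smul (w := fun v => fderiv ℝ f x v +
          (1 / 2 : ℝ) • fderiv ℝ (fderiv ℝ f) x v v) hη hsupp (by fun_prop))]
    congr with v
    module
  have remainder_le (v : E) : ‖η ‖v‖ • (taylor v - f (x + v))‖ ≤ M / 6 * r ^ 3 * |η ‖v‖| := by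
    obtain hv | hv := lt_or_ge r ‖v‖
    · simp [hsupp _ hv]
    have M_nonneg : 0 ≤ M :=
      (norm_nonneg _).trans (hM x (mem_closedBall_self ((norm_nonneg v).trans hv)))
    rw [norm_smul, Real.norm_eq_abs, mul_comm, norm_sub_rev]
    gcongr
    exact (norm_sub_taylor_two_le hv hf hM).trans (by gcongr)
  rw [integral_eq, ← integral_const_mul]
  exact norm_integral_le_of_norm_le (hη.abs.const_mul _) (.of_forall remainder_le)

theorem integral_radial_div_smul (η : ℝ → ℝ) (f : E → F) {ε : ℝ} (hε : 0 < ε) :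
    ∫ v, η (‖v‖ / ε) • f v = ε ^ finrank ℝ E • ∫ v, η ‖v‖ • f (ε • v) := by
  rw [← Measure.integral_comp_inv_smul_of_nonneg _ _ hε.le]
  simp [norm_smul, abs_of_pos hε, div_eq_inv_mul, hε.ne']

theorem radialSecondMoment_comp_div (η : ℝ → ℝ) {ε : ℝ} (hε : 0 < ε) :
    radialSecondMoment E (fun t => η (t / ε)) =
      radialSecondMoment E η * ε ^ (finrank ℝ E + 2) := by
  have := integral_radial_div_smul η (fun v : E => ‖v‖ ^ 2) hε
  simp only [smul_eq_mul, norm_smul, mul_pow, mul_left_comm _ (‖ε‖ ^ 2), integral_const_mul] at this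
  rw [radialSecondMoment, this, radialSecondMoment, Real.norm_of_nonneg hε.le]
  ring

/-- The nonlocal operator `ℒ_ε` with radial kernel `η` at scale `ε`, an approximation of `-Δ`;
`η` is normalized by its second moment. -/
noncomputable def nonlocalLaplacian (η : ℝ → ℝ) (ε : ℝ) (f : E → F) (x : E) : F :=
  (2 / (radialSecondMoment E η * ε ^ (finrank ℝ E + 2))) •
    ∫ y, η (‖x - y‖ / ε) • (f x - f y)

theorem nonlocalLaplacian_eq_integral_translate (η : ℝ → ℝ) (f : E → F) (x : E) {ε : ℝ}
    (hε : 0 < ε) :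
    nonlocalLaplacian η ε f x = (2 / radialSecondMoment E (fun t => η (t / ε))) •
      ∫ v, η (‖v‖ / ε) • (f x - f (x + v)) := by
  rw [nonlocalLaplacian, radialSecondMoment_comp_div η hε, ← integral_add_left_eq_self _ x]
  simp only [sub_add_cancel_left, norm_neg]

theorem norm_two_div_radialSecondMoment_smul_add_laplacian_le [CompleteSpace F]
    (hη : Integrable (fun v : E => η ‖v‖)) (hsupp : ∀ t, r < t → η t = 0)
    (hτ : radialSecondMoment E η ≠ 0) {f : E → F} {x : E} {M : ℝ}
    (hf : ∀ y ∈ closedBall x r, ContDiffAt ℝ 3 f y)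
    (hM : ∀ y ∈ closedBall x r, ‖iteratedFDeriv ℝ 3 f y‖ ≤ M) :
    ‖(2 / radialSecondMoment E η) • (∫ v, η ‖v‖ • (f x - f (x + v))) + Δ f x‖
      ≤ M * r ^ 3 * (∫ v : E, |η ‖v‖|) / (3 * |radialSecondMoment E η|) := by
  set τ := radialSecondMoment E η
  have factor : (2 / τ) • (∫ v, η ‖v‖ • (f x - f (x + v))) + Δ f x =
      (2 / τ) • ((∫ v, η ‖v‖ • (f x - f (x + v))) + (τ / 2) • Δ f x) := by
    rw [smul_add, smul_smul, div_mul_div_cancel₀' two_ne_zero, div_self hτ, one_smul]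
  calc _ ≤ ‖2 / τ‖ * (M / 6 * r ^ 3 * ∫ v : E, |η ‖v‖|) := by
        rw [factor, norm_smul]
        gcongr
        exact norm_integral_radial_add_smul_laplacian_le hη hsupp hf hM
    _ = M * r ^ 3 * (∫ v : E, |η ‖v‖|) / (3 * |τ|) := by
        rw [Real.norm_eq_abs, abs_div, abs_two]
        field_simp
        ring

theorem nonlocal_laplacian_consistency_general [CompleteSpace F]
    (hη : Integrable (fun v : E => η ‖v‖)) (hsupp : ∀ t, 1 < t → η t = 0)
    (hτ : radialSecondMoment E η ≠ 0) {f : E → F} {x : E} {ε M : ℝ} (hε : 0 < ε)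
    (hf : ∀ y ∈ closedBall x ε, ContDiffAt ℝ 3 f y)
    (hM : ∀ y ∈ closedBall x ε, ‖iteratedFDeriv ℝ 3 f y‖ ≤ M) :
    ‖nonlocalLaplacian η ε f x + Δ f x‖
      ≤ M * (∫ v : E, |η ‖v‖|) / (3 * |radialSecondMoment E η|) * ε := by
  have integrable : Integrable (fun v : E => η (‖v‖ / ε)) := by
    simpa [norm_smul, abs_of_pos hε, div_eq_inv_mul] using hη.comp_smul (inv_ne_zero hε.ne')
  have support (t : ℝ) (ht : ε < t) : η (t / ε) = 0 := hsupp _ ((one_lt_div hε).2 ht)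
  have second_moment := radialSecondMoment_comp_div (E := E) η hε
  have mass : ∫ v : E, |η (‖v‖ / ε)| = ε ^ finrank ℝ E * ∫ v : E, |η ‖v‖| := by
    simpa using integral_radial_div_smul (fun t => |η t|) (fun _ : E => (1 : ℝ)) hε
  rw [nonlocalLaplacian_eq_integral_translate η f x hε]
  refine (norm_two_div_radialSecondMoment_smul_add_laplacian_le integrable support
    (by rw [second_moment]; positivity) hf hM).trans_eq ?_
  rw [mass, second_moment, abs_mul, abs_of_pos (pow_pos hε _), pow_add]
  field_simp

end RadialKernel

section EuclideanSpace

variable {ι : Type*} [Fintype ι]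

theorem integral_coord_sq_mul_radial {η : ℝ → ℝ} {r : ℝ}
    (hη : Integrable (fun v : EuclideanSpace ℝ ι => η ‖v‖)) (hsupp : ∀ t, r < t → η t = 0) (i : ι) :
    ∫ v : EuclideanSpace ℝ ι, v i ^ 2 * η ‖v‖ = radialSecondMoment (EuclideanSpace ℝ ι) η := by
  classical
  simp [← integral_radial_mul_inner_sq hη hsupp (e := EuclideanSpace.single i 1), mul_comm,
    EuclideanSpace.inner_single_left]

theorem laplacian_eq_sum_single [DecidableEq ι] {F : Type*} [NormedAddCommGroup F] [NormedSpace ℝ F]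
    (f : EuclideanSpace ℝ ι → F) (x : EuclideanSpace ℝ ι) :
    Δ f x = ∑ k, iteratedFDeriv ℝ 2 f x (fun _ => EuclideanSpace.single k 1) := by
  simp [laplacian_eq_iteratedFDeriv_orthonormalBasis f (EuclideanSpace.basisFun ι ℝ),
    iteratedFDeriv_two_apply]

end EuclideanSpace

/-- Euclidean nonlocal-to-local consistency estimate: for a bounded measurable
normalized kernel `η` supported in `[0,1]` with second moment `τ_η > 0`, and a
`C³` function `h` with `‖D³h‖ ≤ M₃`, the nonlocal operator
`ℒ_ε h(x) = (2/(τ_η ε^{m+2})) ∫ η(|x-y|/ε) (h(x) - h(y)) dy`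
approximates `-Δh` with error at most `(M₃/(3 τ_η)) ε` for every `ε ∈ (0,1]`. -/
theorem nonlocal_laplacian_consistency
    (m : ℕ) (hm : 1 ≤ m) (η : ℝ → ℝ)
    (hmeas : Measurable η) (hnonneg : ∀ t, 0 ≤ η t)
    (hbdd : ∃ B : ℝ, ∀ t, η t ≤ B) (hsupp : ∀ t : ℝ, 1 < t → η t = 0)
    (hnorm : ∫ v : EuclideanSpace ℝ (Fin m), η ‖v‖ = 1)
    (τ : ℝ) (hτ : τ = ∫ v : EuclideanSpace ℝ (Fin m), (v ⟨0, hm⟩) ^ 2 * η ‖v‖)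
    (hτpos : 0 < τ)
    (h : EuclideanSpace ℝ (Fin m) → ℝ) (hh : ContDiff ℝ 3 h)
    (M₃ : ℝ) (hM₃ : ∀ x, ‖iteratedFDeriv ℝ 3 h x‖ ≤ M₃) :
    ∀ ε ∈ Set.Ioc (0:ℝ) 1, ∀ x : EuclideanSpace ℝ (Fin m),
      |(2 / (τ * ε ^ (m + 2))) *
          (∫ y : EuclideanSpace ℝ (Fin m), η (‖x - y‖ / ε) * (h x - h y)) +
        ∑ k : Fin m,
          iteratedFDeriv ℝ 2 h x (fun _ => EuclideanSpace.single k (1:ℝ))|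
        ≤ (M₃ / (3 * τ)) * ε := by
  intro ε hε x
  have hη := integrable_of_integral_eq_one hnorm
  obtain rfl := hτ.trans (integral_coord_sq_mul_radial hη hsupp _)
  simpa [nonlocalLaplacian, laplacian_eq_sum_single, abs_of_nonneg (hnonneg _), hnorm,
    abs_of_pos hτpos] using nonlocal_laplacian_consistency_general hη hsupp hτpos.ne' hε.1
      (fun _ _ => hh.contDiffAt) (fun y _ => hM₃ y)
end

section
/- Let f : ℝ → ℝ be continuous and strictly increasing with f(0) = 0, let σ > 0, and let p : ℝ → [0,∞) be a probability density (∫_ℝ p(s) ds = 1) with p(s) = 0 for |s| > σ. Then there exists a unique t* ∈ ℝ such that ∫_ℝ f(t* − s) p(s) ds = 0, and moreover t* ∈ [−σ, σ]. -/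
open MeasureTheory

/-!
The map `t ↦ 𝔼[f (t - ξ)]` depends only on the law of the noise `ξ`, which need not have a density.
Since this law has compact support, the map is finite and continuous, and it inherits strict
monotonicity from `f`. If `ξ ∈ [a, b]` almost surely, then `a - ξ ≤ 0 ≤ b - ξ`, so the map changes
sign on `[a, b]` and the intermediate value theorem applies.
-/

section CompactSupport

variable {Y E : Type*} [TopologicalSpace Y] [MeasurableSpace Y] [OpensMeasurableSpace Y]
  [NormedAddCommGroup E] {μ : Measure Y} {K : Set Y}

theorem integrable_of_continuous_of_ae_mem_isCompact [T2Space Y] [IsFiniteMeasureOnCompacts μ]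
    {g : Y → E} (hg : Continuous g) (hK : IsCompact K) (hμ : ∀ᵐ y ∂μ, y ∈ K) :
    Integrable g μ := by
  rw [← Measure.restrict_eq_self_of_ae_mem hμ]
  exact hg.continuousOn.integrableOn_compact hK

theorem continuous_integral_of_ae_mem_isCompact {X : Type*} [TopologicalSpace X]
    [FirstCountableTopology X] [LocallyCompactSpace X] [SecondCountableTopologyEither Y E]
    [NormedSpace ℝ E] [IsLocallyFiniteMeasure μ] {F : X → Y → E} (hF : Continuous F.uncurry)
    (hK : IsCompact K) (hμ : ∀ᵐ y ∂μ, y ∈ K) :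
    Continuous fun x => ∫ y, F x y ∂μ := by
  simpa only [Measure.restrict_eq_self_of_ae_mem hμ] using
    continuous_parametric_integral_of_continuous (μ := μ) hF hK

end CompactSupport

section Density

variable {α : Type*} [MeasurableSpace α] {μ : Measure α} {p : α → ℝ}

theorem isProbabilityMeasure_withDensity_ofReal (hp_int : Integrable p μ) (hp_nonneg : 0 ≤ᵐ[μ] p)
    (hp_one : ∫ x, p x ∂μ = 1) :
    IsProbabilityMeasure (μ.withDensity fun x => ENNReal.ofReal (p x)) where
  measure_univ := by
    rw [withDensity_apply _ .univ, Measure.restrict_univ,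
      ← ofReal_integral_eq_lintegral_ofReal hp_int hp_nonneg, hp_one, ENNReal.ofReal_one]

theorem ae_mem_withDensity_ofReal (hp : AEMeasurable p μ) {K : Set α}
    (hp_supp : ∀ᵐ x ∂μ, x ∉ K → p x = 0) :
    ∀ᵐ x ∂μ.withDensity fun x => ENNReal.ofReal (p x), x ∈ K := by
  rw [ae_withDensity_iff' hp.ennreal_ofReal]
  filter_upwards [hp_supp] with x hx hpx
  by_contra hxK
  exact hpx (by rw [hx hxK, ENNReal.ofReal_zero])

theorem integral_withDensity_ofReal {E : Type*} [NormedAddCommGroup E] [NormedSpace ℝ E]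
    (hp : AEMeasurable p μ) (hp_nonneg : 0 ≤ᵐ[μ] p) (g : α → E) :
    ∫ x, g x ∂μ.withDensity (fun x => ENNReal.ofReal (p x)) = ∫ x, p x • g x ∂μ := by
  rw [integral_withDensity_eq_integral_toReal_smul₀ hp.ennreal_ofReal
    (.of_forall fun _ => ENNReal.ofReal_lt_top)]
  refine integral_congr_ae ?_
  filter_upwards [hp_nonneg] with x hx
  rw [ENNReal.toReal_ofReal hx]

end Density

theorem strictMono_integral {T α : Type*} [Preorder T] [MeasurableSpace α] {μ : Measure α}
    [NeZero μ] {F : T → α → ℝ} (hF : ∀ᵐ x ∂μ, StrictMono (F · x))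
    (h_int : ∀ t, Integrable (F t) μ) :
    StrictMono fun t => ∫ x, F t x ∂μ := by
  intro t u htu
  have h_lt : ∀ᵐ x ∂μ, F t x < F u x := hF.mono fun _ hx => hx htu
  have h_le : F t ≤ᵐ[μ] F u := h_lt.mono fun _ => le_of_lt
  refine (integral_mono_ae (h_int t) (h_int u) h_le).lt_of_ne fun h_eq => ?_
  have h_ae : F t =ᵐ[μ] F u := (integral_eq_iff_of_ae_le (h_int t) (h_int u) h_le).mp h_eq
  obtain ⟨x, hx_lt, hx_eq⟩ := (h_lt.and h_ae).exists
  exact hx_lt.ne hx_eq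

theorem modified_trend_well_posed_general {f : ℝ → ℝ} (hf_cont : Continuous f)
    (hf_mono : StrictMono f) (hf0 : f 0 = 0) {μ : Measure ℝ} [IsFiniteMeasure μ] [NeZero μ]
    {a b : ℝ} (hμ : ∀ᵐ s ∂μ, s ∈ Set.Icc a b) :
    ∃ t : ℝ, (∫ s, f (t - s) ∂μ = 0) ∧ t ∈ Set.Icc a b ∧
      ∀ t' : ℝ, (∫ s, f (t' - s) ∂μ = 0) → t' = t := by
  have h_cont : Continuous fun t => ∫ s, f (t - s) ∂μ :=
    continuous_integral_of_ae_mem_isCompact (by fun_prop) isCompact_Icc hμ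
  have h_mono : StrictMono fun t => ∫ s, f (t - s) ∂μ :=
    strictMono_integral (.of_forall fun s _ _ h => hf_mono (sub_lt_sub_right h s)) fun t =>
      integrable_of_continuous_of_ae_mem_isCompact (by fun_prop) isCompact_Icc hμ
  have h_left : ∫ s, f (a - s) ∂μ ≤ 0 :=
    integral_nonpos_of_ae <| hμ.mono fun _ hs =>
      (hf_mono.monotone (sub_nonpos.mpr hs.1)).trans_eq hf0
  have h_right : 0 ≤ ∫ s, f (b - s) ∂μ :=
    integral_nonneg_of_ae <| hμ.mono fun _ hs =>
      hf0.symm.trans_le (hf_mono.monotone (sub_nonneg.mpr hs.2))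
  obtain ⟨s, has, hsb⟩ := hμ.exists
  obtain ⟨t, ht_mem, ht⟩ :=
    intermediate_value_Icc (has.trans hsb) h_cont.continuousOn ⟨h_left, h_right⟩
  exact ⟨t, ht, ht_mem, fun t' ht' => h_mono.injective (ht'.trans ht.symm)⟩

/-- Well-posedness of the modified trend value: if `f` is continuous, strictly
increasing with `f 0 = 0`, and `p` is a probability density supported in
`[-σ, σ]`, then there is a unique `t*` with `∫ f(t* - s) p(s) ds = 0`, and
moreover `t* ∈ [-σ, σ]`. -/
theorem modified_trend_well_posed
    (f : ℝ → ℝ) (hf_cont : Continuous f) (hf_mono : StrictMono f)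
    (hf0 : f 0 = 0) (σ : ℝ) (hσ : 0 < σ) (p : ℝ → ℝ)
    (hp_meas : Measurable p) (hp_nonneg : ∀ s, 0 ≤ p s)
    (hp_int : Integrable p) (hp_one : ∫ s, p s = 1)
    (hp_supp : ∀ s : ℝ, σ < |s| → p s = 0) :
    ∃ t : ℝ, (∫ s, f (t - s) * p s = 0) ∧ t ∈ Set.Icc (-σ) σ ∧
      ∀ t' : ℝ, (∫ s, f (t' - s) * p s = 0) → t' = t := by
  have h_prob := isProbabilityMeasure_withDensity_ofReal hp_int (.of_forall hp_nonneg) hp_one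
  have h_supp : ∀ s, s ∉ Set.Icc (-σ) σ → p s = 0 := fun s hs =>
    hp_supp s (not_le.mp (mt abs_le.mp hs))
  simpa only [integral_withDensity_ofReal hp_meas.aemeasurable (.of_forall hp_nonneg),
    smul_eq_mul, mul_comm (p _)] using
    modified_trend_well_posed_general hf_cont hf_mono hf0
      (ae_mem_withDensity_ofReal hp_meas.aemeasurable (.of_forall h_supp))
end

section
/- Let m, q ≥ 1, let r ∈ (0,1], and let x₁,…,x_q be independent random points, each uniformly distributed on the unit cube [0,1]^m. For l = 1,…,q let V_l := { x ∈ ℝ^m : |x − x_l| ≤ |x − x_j| for all j = 1,…,q } be the l-th Voronoi cell of the sample. Then with probability at least 1 − r^{−m} exp(−q r^m), every cell satisfies diam( V_l ∩ [0,1]^m ) ≤ 4√m · r, where diam denotes the Euclidean diameter. -/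
open MeasureTheory

/-!
Cut the cube into `N ^ m` equal cells, where `N = ⌊1 / r⌋`, so that the side length of a cell lies
between `r` and `2 r`. A given cell has mass at least `r ^ m`, so the sample misses it with
probability at most `(1 - r ^ m) ^ q ≤ exp (-q r ^ m)`, and by the union bound the sample meets
every cell except with probability at most `N ^ m exp (-q r ^ m)`. When it does, every point of the
cube is within a cell diameter, at most `2 √m r`, of some sample point, hence of the centre of any
Voronoi cell containing it.
-/

section Voronoi

variable {X κ : Type*} [PseudoMetricSpace X]

/-- The Voronoi cell of index `l` of a family `p` of points. Cells are closed, so points equidistant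
from several centres belong to all of the corresponding cells. -/
def voronoiCell (p : κ → X) (l : κ) : Set X := {x | ∀ j, dist x (p l) ≤ dist x (p j)}

theorem diam_voronoiCell_inter_le {p : κ → X} {K : Set X} {d : ℝ} (hd : 0 ≤ d)
    (hp : ∀ x ∈ K, ∃ j, dist x (p j) ≤ d) (l : κ) :
    Metric.diam (voronoiCell p l ∩ K) ≤ 2 * d := by
  have dist_centre_le : ∀ x ∈ voronoiCell p l ∩ K, dist x (p l) ≤ d := by
    rintro x ⟨hxl, hxK⟩
    obtain ⟨j, hj⟩ := hp x hxK
    exact (hxl j).trans hj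
  refine Metric.diam_le_of_forall_dist_le (by positivity) fun x hx y hy => ?_
  linarith [dist_triangle_right x y (p l), dist_centre_le x hx, dist_centre_le y hy]

theorem diam_voronoiCell_inter_le_of_forall_exists_mem {C : Type*} {p : κ → X} {K : Set X}
    {A : C → Set X} {d : ℝ} (hd : 0 ≤ d) (hK : K ⊆ ⋃ k, A k)
    (hA : ∀ k, ∀ x ∈ A k, ∀ y ∈ A k, dist x y ≤ d) (hp : ∀ k, ∃ j, p j ∈ A k) (l : κ) :
    Metric.diam (voronoiCell p l ∩ K) ≤ 2 * d := by
  refine diam_voronoiCell_inter_le hd (fun x hx => ?_) l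
  obtain ⟨k, hxk⟩ := Set.mem_iUnion.1 (hK hx)
  obtain ⟨j, hjk⟩ := hp k
  exact ⟨j, hA k x hxk _ hjk⟩

end Voronoi

section IndependentSamples

variable {κ : Type*} [Fintype κ]

theorem measureReal_pi_forall_notMem_le_exp {Ω : κ → Type*} [∀ j, MeasurableSpace (Ω j)]
    (μ : ∀ j, Measure (Ω j)) [∀ j, IsProbabilityMeasure (μ j)] {s : ∀ j, Set (Ω j)}
    (hs : ∀ j, MeasurableSet (s j)) :
    (Measure.pi μ).real {ω | ∀ j, ω j ∉ s j} ≤ Real.exp (-∑ j, (μ j).real (s j)) := by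
  have missed_eq_pi : {ω : ∀ j, Ω j | ∀ j, ω j ∉ s j} = Set.univ.pi fun j => (s j)ᶜ := by
    ext ω
    simp
  calc (Measure.pi μ).real {ω | ∀ j, ω j ∉ s j}
      = ∏ j, (μ j).real (s j)ᶜ := by
        simp only [missed_eq_pi, measureReal_def, Measure.pi_pi, ENNReal.toReal_prod]
    _ = ∏ j, (1 - (μ j).real (s j)) := by simp only [probReal_compl_eq_one_sub (hs _)]
    _ ≤ ∏ j, Real.exp (-(μ j).real (s j)) :=
        Finset.prod_le_prod (fun j _ => sub_nonneg.2 measureReal_le_one)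
          fun j _ => Real.one_sub_le_exp_neg _
    _ = Real.exp (-∑ j, (μ j).real (s j)) := by rw [← Real.exp_sum, Finset.sum_neg_distrib]

theorem le_measureReal_pi_forall_exists_mem {X C : Type*} [MeasurableSpace X] [Fintype C]
    (μ : κ → Measure X) [∀ j, IsProbabilityMeasure (μ j)] {A : C → Set X}
    (hA : ∀ k, MeasurableSet (A k)) {p : ℝ} (hp : ∀ j k, p ≤ (μ j).real (A k)) :
    1 - Fintype.card C * Real.exp (-Fintype.card κ * p) ≤
      (Measure.pi μ).real {ω | ∀ k, ∃ j, ω j ∈ A k} := by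
  let missed (k : C) : Set (κ → X) := {ω | ∀ j, ω j ∉ A k}
  have measurableSet_missed (k : C) : MeasurableSet (missed k) := by
    simp only [missed, Set.ofPred_forall]
    exact .iInter fun j => (measurable_pi_apply j (hA k)).compl
  have missed_le (k : C) :
      (Measure.pi μ).real (missed k) ≤ Real.exp (-Fintype.card κ * p) := by
    refine (measureReal_pi_forall_notMem_le_exp μ fun _ => hA k).trans (Real.exp_le_exp.2 ?_)
    have := Finset.card_nsmul_le_sum Finset.univ (fun j => (μ j).real (A k)) p fun j _ => hp j k
    simp only [Finset.card_univ, nsmul_eq_mul] at this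
    linarith
  have iUnion_missed_le : (Measure.pi μ).real (⋃ k, missed k) ≤
      Fintype.card C * Real.exp (-Fintype.card κ * p) :=
    calc (Measure.pi μ).real (⋃ k, missed k)
        ≤ ∑ k, (Measure.pi μ).real (missed k) := measureReal_iUnion_fintype_le _
      _ ≤ ∑ _k : C, Real.exp (-Fintype.card κ * p) := Finset.sum_le_sum fun k _ => missed_le k
      _ = Fintype.card C * Real.exp (-Fintype.card κ * p) := by
        rw [Finset.sum_const, Finset.card_univ, nsmul_eq_mul]
  have hit_eq_compl : {ω : κ → X | ∀ k, ∃ j, ω j ∈ A k} = (⋃ k, missed k)ᶜ := by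
    ext ω
    simp [missed]
  rw [hit_eq_compl, probReal_compl_eq_one_sub (.iUnion measurableSet_missed)]
  linarith

theorem le_measureReal_pi_forall_diam_voronoiCell_inter_le {X C : Type*} [PseudoMetricSpace X]
    [MeasurableSpace X] [Fintype C] (μ : κ → Measure X) [∀ j, IsProbabilityMeasure (μ j)]
    {K : Set X} {A : C → Set X} (hA : ∀ k, MeasurableSet (A k)) (hK : K ⊆ ⋃ k, A k)
    {p d : ℝ} (hp : ∀ j k, p ≤ (μ j).real (A k)) (hd : 0 ≤ d)
    (hAd : ∀ k, ∀ x ∈ A k, ∀ y ∈ A k, dist x y ≤ d) :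
    1 - Fintype.card C * Real.exp (-Fintype.card κ * p) ≤
      (Measure.pi μ).real {ω | ∀ l, Metric.diam (voronoiCell ω l ∩ K) ≤ 2 * d} :=
  (le_measureReal_pi_forall_exists_mem μ hA hp).trans <| measureReal_mono fun _ hω l =>
    diam_voronoiCell_inter_le_of_forall_exists_mem hd hK hAd hω l

end IndependentSamples

section Grid

variable {ι : Type*}

/-- The closed box in Euclidean space with opposite corners `a` and `b`. The corners are plain
functions, so that they can be given coordinatewise. -/
def closedBox (a b : ι → ℝ) : Set (EuclideanSpace ℝ ι) := {x | ∀ i, x i ∈ Set.Icc (a i) (b i)}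

/-- The unit cube `[0, 1]^ι` in Euclidean space. -/
abbrev unitCube (ι : Type*) : Set (EuclideanSpace ℝ ι) := closedBox 0 1

/-- The cell of index `k` in the subdivision of the unit cube into `N ^ card ι` equal cubes. Cells
are closed, so neighbouring ones share a face. -/
def gridCell (N : ℕ) (k : ι → Fin N) : Set (EuclideanSpace ℝ ι) :=
  closedBox (fun i => (k i : ℝ) / N) (fun i => ((k i : ℝ) + 1) / N)

theorem closedBox_eq_preimage_Icc (a b : ι → ℝ) :
    closedBox a b = WithLp.ofLp ⁻¹' Set.Icc a b := by
  ext x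
  simp [closedBox, Pi.le_def, forall_and]

theorem measurableSet_closedBox [Countable ι] (a b : ι → ℝ) : MeasurableSet (closedBox a b) := by
  rw [closedBox_eq_preimage_Icc]
  exact WithLp.measurable_ofLp _ _ measurableSet_Icc

theorem exists_fin_mem_Icc_div {N : ℕ} (hN : 0 < N) {t : ℝ} (ht : t ∈ Set.Icc (0 : ℝ) 1) :
    ∃ k : Fin N, t ∈ Set.Icc ((k : ℝ) / N) (((k : ℝ) + 1) / N) := by
  have hN_pos : (0 : ℝ) < N := Nat.cast_pos.2 hN
  have htN : t * N ≤ N := mul_le_of_le_one_left hN_pos.le ht.2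
  -- The minimum puts the right endpoint `t = 1` into the last interval.
  refine ⟨⟨min ⌊t * N⌋₊ (N - 1), by omega⟩, ?_⟩
  rw [Set.mem_Icc, div_le_iff₀ hN_pos, le_div_iff₀ hN_pos, Nat.cast_min, Nat.cast_pred hN]
  constructor
  · exact (min_le_left _ _).trans (Nat.floor_le (mul_nonneg ht.1 hN_pos.le))
  · rw [← min_add_add_right, sub_add_cancel]
    exact le_min (Nat.lt_floor_add_one _).le htN

theorem unitCube_subset_iUnion_gridCell {N : ℕ} (hN : 0 < N) :
    unitCube ι ⊆ ⋃ k : ι → Fin N, gridCell N k := by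
  intro x hx
  choose k hk using fun i => exists_fin_mem_Icc_div hN (hx i)
  exact Set.mem_iUnion.2 ⟨k, hk⟩

theorem gridCell_subset_unitCube {N : ℕ} (k : ι → Fin N) : gridCell N k ⊆ unitCube ι := by
  intro x hx i
  have hk : ((k i : ℕ) : ℝ) + 1 ≤ N := by exact_mod_cast (k i).isLt
  exact ⟨(by positivity : (0 : ℝ) ≤ (k i : ℝ) / N).trans (hx i).1,
    (hx i).2.trans (div_le_one_of_le₀ hk N.cast_nonneg)⟩

variable [Fintype ι]

theorem volume_closedBox (a b : ι → ℝ) :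
    volume (closedBox a b) = ∏ i, ENNReal.ofReal (b i - a i) := by
  rw [closedBox_eq_preimage_Icc, (PiLp.volume_preserving_ofLp ι).measure_preimage
    measurableSet_Icc.nullMeasurableSet, Real.volume_Icc_pi]

theorem dist_le_of_mem_closedBox {a b : ι → ℝ} {d : ℝ} (hd : 0 ≤ d) (hab : ∀ i, b i - a i ≤ d)
    {x y : EuclideanSpace ℝ ι} (hx : x ∈ closedBox a b) (hy : y ∈ closedBox a b) :
    dist x y ≤ √(Fintype.card ι) * d := by
  rw [EuclideanSpace.dist_eq]
  refine Real.sqrt_le_iff.2 ⟨by positivity, ?_⟩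
  calc ∑ i, dist (x i) (y i) ^ 2 ≤ ∑ _i : ι, d ^ 2 := by
        gcongr with i
        exact (Real.dist_le_of_mem_Icc (hx i) (hy i)).trans (hab i)
    _ = (√(Fintype.card ι) * d) ^ 2 := by
        simp [mul_pow]

instance isProbabilityMeasure_restrict_unitCube :
    IsProbabilityMeasure (volume.restrict (unitCube ι)) :=
  ⟨by simp [volume_closedBox]⟩

theorem measureReal_restrict_unitCube_gridCell (N : ℕ) (k : ι → Fin N) :
    (volume.restrict (unitCube ι)).real (gridCell N k) = (N : ℝ)⁻¹ ^ Fintype.card ι := by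
  rw [measureReal_def, Measure.restrict_eq_self _ (gridCell_subset_unitCube k), gridCell,
    volume_closedBox]
  simp [← sub_div]

theorem dist_le_of_mem_gridCell {N : ℕ} {k : ι → Fin N} {x y : EuclideanSpace ℝ ι}
    (hx : x ∈ gridCell N k) (hy : y ∈ gridCell N k) :
    dist x y ≤ √(Fintype.card ι) * (N : ℝ)⁻¹ :=
  dist_le_of_mem_closedBox (by positivity)
    (fun i => by rw [← sub_div, add_sub_cancel_left, one_div]) hx hy

theorem le_measureReal_pi_unitCube_forall_diam_voronoiCell_inter_le (κ : Type*) [Fintype κ] {N : ℕ}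
    (hN : 0 < N) :
    1 - (N : ℝ) ^ Fintype.card ι * Real.exp (-Fintype.card κ * (N : ℝ)⁻¹ ^ Fintype.card ι) ≤
      (Measure.pi fun _ : κ => volume.restrict (unitCube ι)).real
        {ω | ∀ l, Metric.diam (voronoiCell ω l ∩ unitCube ι) ≤
          2 * (√(Fintype.card ι) * (N : ℝ)⁻¹)} := by
  classical
  simpa only [Fintype.card_fun, Fintype.card_fin, Nat.cast_pow] using
    le_measureReal_pi_forall_diam_voronoiCell_inter_le
      (fun _ : κ => volume.restrict (unitCube ι)) (fun _ => measurableSet_closedBox _ _)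
      (unitCube_subset_iUnion_gridCell hN)
      (fun _ k => (measureReal_restrict_unitCube_gridCell N k).ge) (by positivity)
      fun _ _ hx _ hy => dist_le_of_mem_gridCell hx hy

end Grid

theorem exists_nat_inv_mem_Icc {r : ℝ} (hr : r ∈ Set.Ioc (0 : ℝ) 1) :
    ∃ N : ℕ, 0 < N ∧ (N : ℝ)⁻¹ ∈ Set.Icc r (2 * r) := by
  have one_le_inv : 1 ≤ r⁻¹ := (one_le_inv₀ hr.1).2 hr.2
  have hN : 0 < ⌊r⁻¹⌋₊ := Nat.floor_pos.2 one_le_inv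
  have hN_pos : (0 : ℝ) < ⌊r⁻¹⌋₊ := Nat.cast_pos.2 hN
  refine ⟨⌊r⁻¹⌋₊, hN, ?_, ?_⟩
  · exact (le_inv_comm₀ hN_pos hr.1).1 (Nat.floor_le (inv_pos.2 hr.1).le)
  · refine inv_le_of_inv_le₀ (by linarith [hr.1]) ?_
    rw [mul_inv, mul_comm, ← div_eq_mul_inv]
    exact (Nat.div_two_lt_floor one_le_inv).le

/-- Voronoi-cell diameter bound: for `q` i.i.d. points uniformly distributed on
the unit cube in `ℝ^m` (with the Euclidean metric) and `r ∈ (0,1]`, with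
probability at least `1 - r^{-m} exp(-q r^m)` every Voronoi cell of the sample,
intersected with the cube, has Euclidean diameter at most `4 √m · r`. -/
theorem voronoi_cell_diameter_bound
    (m q : ℕ) (hm : 1 ≤ m) (hq : 1 ≤ q) (r : ℝ) (hr : r ∈ Set.Ioc (0:ℝ) 1) :
    ENNReal.ofReal (1 - (r ^ m)⁻¹ * Real.exp (-(q : ℝ) * r ^ m)) ≤
      (Measure.pi fun _ : Fin q =>
          volume.restrict {x : EuclideanSpace ℝ (Fin m) | ∀ i, x i ∈ Set.Icc (0:ℝ) 1})
        {ω : Fin q → EuclideanSpace ℝ (Fin m) |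
          ∀ l : Fin q,
            Metric.diam
              ({x : EuclideanSpace ℝ (Fin m) | ∀ j : Fin q, dist x (ω l) ≤ dist x (ω j)}
                ∩ {x : EuclideanSpace ℝ (Fin m) | ∀ i, x i ∈ Set.Icc (0:ℝ) 1})
              ≤ 4 * Real.sqrt m * r} := by
  obtain ⟨N, hN, hrN, hNr⟩ := exists_nat_inv_mem_Icc hr
  have hr₀ : 0 < r := hr.1
  have hN_le : (N : ℝ) ≤ r⁻¹ := (le_inv_comm₀ hr₀ (Nat.cast_pos.2 hN)).1 hrN
  have diam_bound_le : 2 * (√m * (N : ℝ)⁻¹) ≤ 4 * √m * r := by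
    linarith [mul_le_mul_of_nonneg_left hNr (Real.sqrt_nonneg m)]
  have grid_bound := le_measureReal_pi_unitCube_forall_diam_voronoiCell_inter_le
    (ι := Fin m) (Fin q) hN
  simp only [Fintype.card_fin] at grid_bound
  refine ENNReal.ofReal_le_of_le_toReal ?_
  calc 1 - (r ^ m)⁻¹ * Real.exp (-(q : ℝ) * r ^ m)
      ≤ 1 - (N : ℝ) ^ m * Real.exp (-(q : ℝ) * (N : ℝ)⁻¹ ^ m) := by
        rw [← inv_pow]
        simp only [neg_mul]
        gcongr
    _ ≤ _ := grid_bound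
    _ ≤ _ := measureReal_mono fun ω hω l => (hω l).trans diam_bound_le
end
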